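/- If H and K are two distinct subgroups of order 6 of the binary tetrahedral group T, then H and K together generate T, i.e. the smallest subgroup of T containing both H and K is T itself. -/

import Mathlib

/-- The matrix `I = [[i,0],[0,-i]]` as an element of `SL(2,ℂ)`. -/
def binTetraI : Matrix.SpecialLinearGroup (Fin 2) ℂ :=
  ⟨!![Complex.I, 0; 0, -Complex.I], by
    simp [Matrix.det_fin_two_of, Complex.I_mul_I]⟩

/-- The matrix `τ = -(1/2)·[[1+i,-1+i],[1+i,1-i]]` as an element of `SL(2,ℂ)`. -/
noncomputable def binTetraTau : Matrix.SpecialLinearGroup (Fin 2) ℂ :=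
  ⟨!![-(1 + Complex.I) / 2, -(-1 + Complex.I) / 2;
      -(1 + Complex.I) / 2, -(1 - Complex.I) / 2], by
    simp [Matrix.det_fin_two_of]
    ring_nf
    simp [Complex.I_sq]
    norm_num⟩

/-- The binary tetrahedral group `T`, the subgroup of `SL(2,ℂ)` generated by `I` and `τ`. -/
def binTetra : Subgroup (Matrix.SpecialLinearGroup (Fin 2) ℂ) :=
  Subgroup.closure {binTetraI, binTetraTau}

/-- Doubled coordinates of the Hurwitz units. -/
def hurF : Finset (ℤ × ℤ × ℤ × ℤ) :=
  ((({-2, -1, 0, 1, 2} : Finset ℤ) ×ˢ ({-2, -1, 0, 1, 2} : Finset ℤ) ×ˢ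
    ({-2, -1, 0, 1, 2} : Finset ℤ) ×ˢ ({-2, -1, 0, 1, 2} : Finset ℤ))).filter
    (fun q => q.1 ^ 2 + q.2.1 ^ 2 + q.2.2.1 ^ 2 + q.2.2.2 ^ 2 = 4 ∧
      (q.1 - q.2.1) % 2 = 0 ∧ (q.1 - q.2.2.1) % 2 = 0 ∧ (q.1 - q.2.2.2) % 2 = 0)

set_option maxRecDepth 100000 in
lemma hurF_card : hurF.card = 24 := by decide +kernel

set_option maxRecDepth 100000 in
lemma hurF_tau : ∀ q ∈ hurF, ∃ r ∈ hurF,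
    2 * r.1 = -q.1 + q.2.1 - q.2.2.1 + q.2.2.2 ∧
    2 * r.2.1 = -q.1 - q.2.1 + q.2.2.1 + q.2.2.2 ∧
    2 * r.2.2.1 = q.1 - q.2.1 - q.2.2.1 + q.2.2.2 ∧
    2 * r.2.2.2 = -q.1 - q.2.1 - q.2.2.1 - q.2.2.2 := by decide +kernel

set_option maxRecDepth 100000 in
lemma hurF_I : ∀ q ∈ hurF, (-q.2.1, q.1, -q.2.2.2, q.2.2.1) ∈ hurF := by decide +kernel

/-- Matrix attached to doubled coordinates. -/
noncomputable def hurM (q : ℤ × ℤ × ℤ × ℤ) : Matrix (Fin 2) (Fin 2) ℂ :=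
  !![((q.1 : ℂ) + q.2.1 * Complex.I) / 2, ((q.2.2.1 : ℂ) + q.2.2.2 * Complex.I) / 2;
     (-(q.2.2.1 : ℂ) + q.2.2.2 * Complex.I) / 2, ((q.1 : ℂ) - q.2.1 * Complex.I) / 2]

lemma hurM_I (q : ℤ × ℤ × ℤ × ℤ) :
    (binTetraI : Matrix (Fin 2) (Fin 2) ℂ) * hurM q = hurM (-q.2.1, q.1, -q.2.2.2, q.2.2.1) := by
  have h := Complex.I_sq
  simp only [binTetraI, hurM, Matrix.mul_fin_two]
  push_cast
  congr 1
  ext i j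
  fin_cases i <;> fin_cases j <;> simp <;> grind

lemma hurM_tau (q r : ℤ × ℤ × ℤ × ℤ)
    (h1 : 2 * r.1 = -q.1 + q.2.1 - q.2.2.1 + q.2.2.2)
    (h2 : 2 * r.2.1 = -q.1 - q.2.1 + q.2.2.1 + q.2.2.2)
    (h3 : 2 * r.2.2.1 = q.1 - q.2.1 - q.2.2.1 + q.2.2.2)
    (h4 : 2 * r.2.2.2 = -q.1 - q.2.1 - q.2.2.1 - q.2.2.2) :
    (binTetraTau : Matrix (Fin 2) (Fin 2) ℂ) * hurM q = hurM r := by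
  have h := Complex.I_sq
  have h1' := congrArg (Int.cast : ℤ → ℂ) h1
  have h2' := congrArg (Int.cast : ℤ → ℂ) h2
  have h3' := congrArg (Int.cast : ℤ → ℂ) h3
  have h4' := congrArg (Int.cast : ℤ → ℂ) h4
  push_cast at h1' h2' h3' h4'
  clear h1 h2 h3 h4
  simp only [binTetraTau, hurM, Matrix.mul_fin_two]
  ext i j
  fin_cases i <;> fin_cases j <;> simp <;> grind

lemma I_pow : binTetraI ^ 4 = 1 := by
  have h := Complex.I_sq
  rw [pow_succ, pow_succ, pow_two]
  apply Subtype.ext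
  simp only [Matrix.SpecialLinearGroup.coe_mul, Matrix.SpecialLinearGroup.coe_one]
  simp only [binTetraI, Matrix.mul_fin_two]
  ext i j
  fin_cases i <;> fin_cases j <;> simp

lemma tau_pow : binTetraTau ^ 3 = 1 := by
  have h := Complex.I_sq
  rw [pow_succ, pow_two]
  apply Subtype.ext
  simp only [Matrix.SpecialLinearGroup.coe_mul, Matrix.SpecialLinearGroup.coe_one]
  simp only [binTetraTau, Matrix.mul_fin_two]
  ext i j
  fin_cases i <;> fin_cases j <;> simp <;> grind

lemma I_tau : binTetraI * binTetraTau * binTetraI * binTetraTau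
    = binTetraTau * binTetraTau * binTetraI := by
  have h := Complex.I_sq
  apply Subtype.ext
  simp only [Matrix.SpecialLinearGroup.coe_mul, Matrix.SpecialLinearGroup.coe_one]
  simp only [binTetraI, binTetraTau, Matrix.mul_fin_two]
  ext i j
  fin_cases i <;> fin_cases j <;> simp <;> grind

lemma mem_hur (x : Matrix.SpecialLinearGroup (Fin 2) ℂ) (hx : x ∈ binTetra) :
    ∃ q ∈ hurF, (x : Matrix (Fin 2) (Fin 2) ℂ) = hurM q := by
  have hI : ∀ y : Matrix.SpecialLinearGroup (Fin 2) ℂ,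
      (∃ q ∈ hurF, (y : Matrix (Fin 2) (Fin 2) ℂ) = hurM q) →
      ∃ q ∈ hurF, ((binTetraI * y : Matrix.SpecialLinearGroup (Fin 2) ℂ) :
        Matrix (Fin 2) (Fin 2) ℂ) = hurM q := by
    rintro y ⟨q, hq, h⟩
    exact ⟨_, hurF_I q hq, by rw [Matrix.SpecialLinearGroup.coe_mul, h, hurM_I]⟩
  have hT : ∀ y : Matrix.SpecialLinearGroup (Fin 2) ℂ,
      (∃ q ∈ hurF, (y : Matrix (Fin 2) (Fin 2) ℂ) = hurM q) →
      ∃ q ∈ hurF, ((binTetraTau * y : Matrix.SpecialLinearGroup (Fin 2) ℂ) :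
        Matrix (Fin 2) (Fin 2) ℂ) = hurM q := by
    rintro y ⟨q, hq, h⟩
    obtain ⟨r, hr, h1, h2, h3, h4⟩ := hurF_tau q hq
    exact ⟨r, hr, by rw [Matrix.SpecialLinearGroup.coe_mul, h, hurM_tau q r h1 h2 h3 h4]⟩
  have hI' : binTetraI⁻¹ = binTetraI * (binTetraI * binTetraI) := by
    rw [inv_eq_iff_mul_eq_one, ← I_pow]; simp only [pow_succ, pow_zero, one_mul, mul_assoc]
  have hT' : binTetraTau⁻¹ = binTetraTau * binTetraTau := by
    rw [inv_eq_iff_mul_eq_one, ← tau_pow]; simp only [pow_succ, pow_zero, one_mul, mul_assoc]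
  unfold binTetra at hx
  induction hx using Subgroup.closure_induction_left with
  | one =>
    refine ⟨(2, 0, 0, 0), by decide +kernel, ?_⟩
    ext i j
    fin_cases i <;> fin_cases j <;> simp [hurM]
  | mul_left x hx y hy ih =>
    rcases hx with rfl | rfl
    · exact hI _ ih
    · exact hT _ ih
  | inv_mul_cancel x hx y hy ih =>
    rcases hx with rfl | rfl
    · rw [hI', mul_assoc, mul_assoc]; exact hI _ (hI _ (hI _ ih))
    · rw [hT', mul_assoc]; exact hT _ (hT _ ih)

lemma card_le : Finite binTetra ∧ Nat.card binTetra ≤ 24 := by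
  choose f hf hf' using fun x : binTetra => mem_hur x.1 x.2
  have inj : Function.Injective (fun x => (⟨f x, hf x⟩ : hurF)) := by
    intro x y hxy
    have : f x = f y := congrArg Subtype.val hxy
    apply Subtype.ext
    apply Subtype.ext
    rw [hf' x, hf' y, this]
  refine ⟨Finite.of_injective _ inj, ?_⟩
  have := Nat.card_le_card_of_injective _ inj
  simpa [hurF_card] using this

lemma index_two (M : Subgroup binTetra) (h : M.index = 2) : False := by
  have hN : M.Normal := Subgroup.normal_of_index_eq_two h
  let a : binTetra := ⟨binTetraI, Subgroup.subset_closure (by simp)⟩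
  let t : binTetra := ⟨binTetraTau, Subgroup.subset_closure (by simp)⟩
  have ht3 : t ^ 3 = 1 := Subtype.ext tau_pow
  have hat : a * t * a * t = t * t * a := Subtype.ext I_tau
  have ht : t ∈ M := by
    have h2 := Subgroup.sq_mem_of_index_two h (t ^ 2)
    have : (t ^ 2) ^ 2 = t := by
      calc (t ^ 2) ^ 2 = t ^ 3 * t := by group
        _ = t := by rw [ht3, one_mul]
    rwa [this] at h2
  have hs := hN.conj_mem t ht a
  have ha : a ∈ M := by
    have : a = t * t * (a * t * a⁻¹)⁻¹ * t⁻¹ := by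
      have e : a = t * t * a * t⁻¹ * a⁻¹ * t⁻¹ := by rw [← hat]; group
      calc a = t * t * a * t⁻¹ * a⁻¹ * t⁻¹ := e
        _ = _ := by group
    rw [this]
    exact M.mul_mem (M.mul_mem (M.mul_mem ht ht) (M.inv_mem hs)) (M.inv_mem ht)
  have htop : M = ⊤ := by
    rw [eq_top_iff]
    rintro ⟨x, hx⟩ -
    have : binTetra ≤ M.map binTetra.subtype := by
      conv_lhs => unfold binTetra
      rw [Subgroup.closure_le]
      rintro y (rfl | rfl)
      · exact ⟨a, ha, rfl⟩
      · exact ⟨t, ht, rfl⟩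
    obtain ⟨y, hy, hxy⟩ := this hx
    have : y = ⟨x, hx⟩ := Subtype.ext hxy
    exact this ▸ hy
  rw [htop] at h
  simp at h

/-- If `H` and `K` are two distinct subgroups of order 6 of the binary tetrahedral
group `T`, then `H` and `K` together generate `T`. -/
theorem stmt17 (H K : Subgroup ↥binTetra)
    (hH : Nat.card H = 6) (hK : Nat.card K = 6) (hne : H ≠ K) :
    H ⊔ K = ⊤ := by
  obtain ⟨hfin, hc⟩ := card_le
  by_contra hM
  have h6 : 6 ∣ Nat.card (H ⊔ K : Subgroup binTetra) := hH ▸ Subgroup.card_dvd_of_le le_sup_left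
  have hmul := (H ⊔ K).card_mul_index
  have hi1 : (H ⊔ K).index ≠ 1 := fun h => hM (Subgroup.index_eq_one.1 h)
  have hi0 : (H ⊔ K).index ≠ 0 := Subgroup.index_ne_zero_of_finite
  have hi2 : (H ⊔ K).index ≠ 2 := fun h => index_two _ h
  have hne6 : Nat.card (H ⊔ K : Subgroup binTetra) ≠ 6 := by
    intro h
    have e1 : H = H ⊔ K := Subgroup.eq_of_le_of_card_ge le_sup_left (by omega)
    have e2 : K = H ⊔ K := Subgroup.eq_of_le_of_card_ge le_sup_right (by omega)
    exact hne (e1.trans e2.symm)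
  have hpos : 0 < Nat.card (H ⊔ K : Subgroup binTetra) := Nat.card_pos
  have h12 : 12 ≤ Nat.card (H ⊔ K : Subgroup binTetra) := by omega
  have h3 : 3 ≤ (H ⊔ K).index := by omega
  nlinarith
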